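/- Let k, l : ℕ → ℕ satisfy k_n ≥ 2 and l_n ≥ 1 for all n, and define q_0 = 1, q_{n+1} = k_n · l_n · q_n². Then the series Σ_{n=1}^∞ 1/q_n converges, its sum α satisfies 0 < α < 1, and α is irrational. -/

import Mathlib

/-!
Since `q_{n+1} ≥ 2 q_n²`, the terms decay at least geometrically with ratio `1/4`, so the tail
`T_n = ∑_{m > n} 1/q_m` satisfies `0 < T_n ≤ (4/3)/q_{n+1} ≤ (2/3)/q_n²` (`qseq_tail`); for `n = 0`
this gives convergence and `0 < α < 1`. As `q_i ∣ q_n` for `i ≤ n`, the partial sum up to `1/q_n`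
has denominator dividing `q_n` (`qseq_partial`). If `α = a/b`, then `b q_n T_n` is a positive
integer, yet it is at most `(2/3) b/q_n`, which is below `1` once `q_n > b`.
-/

/-- `q_0 = 1`, `q_{n+1} = k_n * l_n * q_n ^ 2`. -/
def qseq (k l : ℕ → ℕ) : ℕ → ℕ
  | 0 => 1
  | n + 1 => k n * l n * (qseq k l n) ^ 2

section
variable {k l : ℕ → ℕ}

lemma qseq_step (hk : ∀ n, 2 ≤ k n) (hl : ∀ n, 1 ≤ l n) (n : ℕ) :
    2 * qseq k l n ^ 2 ≤ qseq k l (n + 1) := by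
  have h : 2 * 1 ≤ k n * l n := Nat.mul_le_mul (hk n) (hl n)
  exact Nat.mul_le_mul_right _ h

lemma two_pow_le_qseq (hk : ∀ n, 2 ≤ k n) (hl : ∀ n, 1 ≤ l n) (n : ℕ) :
    2 ^ n ≤ qseq k l n := by
  induction n with
  | zero => simp [qseq]
  | succ n ih =>
    have h1 := qseq_step hk hl n
    have h2 : 1 ≤ 2 ^ n := Nat.one_le_two_pow
    rw [pow_succ]
    nlinarith

lemma qseq_geom (hk : ∀ n, 2 ≤ k n) (hl : ∀ n, 1 ≤ l n) (n j : ℕ) :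
    2 * qseq k l n ^ 2 * 4 ^ j ≤ qseq k l (j + n + 1) := by
  induction j with
  | zero => simpa using qseq_step hk hl n
  | succ j ih =>
    have h1 := qseq_step hk hl (j + n + 1)
    have h2 := two_pow_le_qseq hk hl (j + n + 1)
    have h3 : 1 ≤ 2 ^ (j + n) := Nat.one_le_two_pow
    have h4 : 2 ≤ qseq k l (j + n + 1) := by rw [pow_succ] at h2; omega
    rw [show j + 1 + n + 1 = j + n + 1 + 1 by ring]
    calc 2 * qseq k l n ^ 2 * 4 ^ (j + 1) = 4 * (2 * qseq k l n ^ 2 * 4 ^ j) := by ring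
      _ ≤ 4 * qseq k l (j + n + 1) := by gcongr
      _ ≤ 2 * qseq k l (j + n + 1) ^ 2 := by nlinarith
      _ ≤ _ := h1

lemma qseq_tail (hk : ∀ n, 2 ≤ k n) (hl : ∀ n, 1 ≤ l n) (n : ℕ) :
    Summable (fun j : ℕ => (1 : ℝ) / qseq k l (j + n + 1)) ∧
    0 < ∑' j : ℕ, (1 : ℝ) / qseq k l (j + n + 1) ∧
    ∑' j : ℕ, (1 : ℝ) / qseq k l (j + n + 1) ≤ 2 / (3 * (qseq k l n : ℝ) ^ 2) := by
  have pos : ∀ m, (0 : ℝ) < qseq k l m := fun m => by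
    exact_mod_cast (Nat.two_pow_pos m).trans_le (two_pow_le_qseq hk hl m)
  have hq := pos n
  have hg : HasSum (fun j : ℕ => 1 / (2 * (qseq k l n : ℝ) ^ 2) * (1 / 4 : ℝ) ^ j)
      (2 / (3 * (qseq k l n : ℝ) ^ 2)) := by
    have h := (hasSum_geometric_of_lt_one (r := (1 / 4 : ℝ)) (by norm_num)
      (by norm_num)).mul_left (1 / (2 * (qseq k l n : ℝ) ^ 2))
    have e : 1 / (2 * (qseq k l n : ℝ) ^ 2) * (1 - 1 / 4 : ℝ)⁻¹ =
        2 / (3 * (qseq k l n : ℝ) ^ 2) := by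
      rw [show (1 - 1 / 4 : ℝ)⁻¹ = 4 / 3 by norm_num]
      field_simp
      norm_num
    rwa [e] at h
  have hle : ∀ j : ℕ, (1 : ℝ) / qseq k l (j + n + 1) ≤
      1 / (2 * (qseq k l n : ℝ) ^ 2) * (1 / 4 : ℝ) ^ j := fun j => by
    have h : (2 * (qseq k l n : ℝ) ^ 2 * 4 ^ j) ≤ qseq k l (j + n + 1) := by
      exact_mod_cast qseq_geom hk hl n j
    calc (1 : ℝ) / qseq k l (j + n + 1) ≤ 1 / (2 * (qseq k l n : ℝ) ^ 2 * 4 ^ j) :=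
          one_div_le_one_div_of_le (by positivity) h
      _ = _ := by rw [one_div_pow, one_div_mul_one_div]
  have hs : Summable (fun j : ℕ => (1 : ℝ) / qseq k l (j + n + 1)) :=
    Summable.of_nonneg_of_le (fun j => by positivity) hle hg.summable
  refine ⟨hs, hs.tsum_pos (fun j => by positivity) 0 (one_div_pos.2 (pos _)), ?_⟩
  exact hasSum_le hle hs.hasSum hg

lemma qseq_partial (hk : ∀ n, 2 ≤ k n) (hl : ∀ n, 1 ≤ l n) (n : ℕ) :
    ∃ S : ℤ, (qseq k l n : ℝ) * ∑ i ∈ Finset.range n, (1 : ℝ) / qseq k l (i + 1) = S := by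
  induction n with
  | zero => exact ⟨0, by simp⟩
  | succ n ih =>
    obtain ⟨S, hS⟩ := ih
    have pos : (qseq k l (n + 1) : ℝ) ≠ 0 := by
      exact_mod_cast ((Nat.two_pow_pos _).trans_le (two_pow_le_qseq hk hl (n + 1))).ne'
    refine ⟨k n * l n * qseq k l n * S + 1, ?_⟩
    rw [Finset.sum_range_succ, mul_add, mul_one_div_cancel pos]
    have hrec : (qseq k l (n + 1) : ℝ) = k n * l n * (qseq k l n : ℝ) ^ 2 := by
      simp [qseq]
    push_cast
    rw [← hS, hrec]
    ring

end

/-- the series `Σ_{n≥1} 1/q_n` converges to an irrational `α ∈ (0,1)`. -/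
theorem stmt_2 (k l : ℕ → ℕ) (hk : ∀ n, 2 ≤ k n) (hl : ∀ n, 1 ≤ l n) :
    Summable (fun n : ℕ => (1 : ℝ) / qseq k l (n + 1)) ∧
    0 < ∑' n : ℕ, (1 : ℝ) / qseq k l (n + 1) ∧
    (∑' n : ℕ, (1 : ℝ) / qseq k l (n + 1)) < 1 ∧
    Irrational (∑' n : ℕ, (1 : ℝ) / qseq k l (n + 1)) := by
  obtain ⟨hs, h0, h1⟩ := qseq_tail hk hl 0
  simp only [add_zero] at hs h0 h1
  refine ⟨hs, h0, h1.trans_lt (by norm_num [qseq]), ?_⟩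
  rintro ⟨r, hr⟩
  -- `n = b` suffices, because `q_b ≥ 2 ^ b > b`.
  set b := r.den with hb
  have hbpos : (0 : ℝ) < b := by exact_mod_cast r.den_pos
  have hbq : (b : ℝ) < qseq k l b := by
    exact_mod_cast Nat.lt_two_pow_self.trans_le (two_pow_le_qseq hk hl b)
  obtain ⟨-, t0, t1⟩ := qseq_tail hk hl b
  obtain ⟨S, hS⟩ := qseq_partial hk hl b
  have hsplit := hs.sum_add_tsum_nat_add b
  rw [← hr] at hsplit
  have hrb : (r : ℝ) * b = r.num := by exact_mod_cast Rat.mul_den_eq_num r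
  set T := ∑' j : ℕ, (1 : ℝ) / qseq k l (j + b + 1)
  set q : ℝ := (qseq k l b : ℝ) with hq
  have hqpos : 0 < q := hbpos.trans hbq
  have key : b * q * T = ((r.num * qseq k l b - b * S : ℤ) : ℝ) := by
    push_cast
    rw [← hS, ← hrb, ← hsplit]
    ring
  have p0 : 0 < b * q * T := by positivity
  have p1 : b * q * T < 1 := by
    calc b * q * T ≤ b * q * (2 / (3 * q ^ 2)) := by gcongr
      _ = 2 / 3 * (b / q) := by field_simp
      _ < 1 := by
        have := (div_lt_one hqpos).2 hbq
        linarith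
  rw [key] at p0 p1
  norm_cast at p0 p1
  omega
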